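/- arXiv:2102.00410 — 3 statements merged into one kernel-verified Lean document; each statement's English description precedes it below -/
import Mathlib

section
/- Let (Λ, μ) be a probability measure space and let ξ₀, ξ₁, ξ₂, ξ₃, ξ₄ : Λ → ℝ be measurable functions satisfying: (i) 0 ≤ ξᵢ(λ) ≤ 1 for all λ and all i; (ii) ξᵢ(λ) + ξ_{i⊕1}(λ) ≤ 1 for all λ and all i; (iii) ∫ ξᵢ ξ_{i⊕1} dμ = 0 for all i; and (iv) the symmetry condition ∫ ξᵢ ξ_{i⊕2} dμ = ∫ ξᵢ ξ_{i⊕3} dμ for all i. Then the non-contextual value of the sequential-measurement correlator satisfies 𝒞 := (2/5) · Σ_{i,j=0}^{4} ∫ ξᵢ ξⱼ dμ ≤ 16/5. -/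
open MeasureTheory

/-!
The double sum is the second moment of the total response `∑ i, ξ i`. Orthogonality forces
`ξ i * ξ (i + 1) = 0` almost everywhere, so almost every ontic state supports only responses that
form an independent set of the cycle of outcomes. As each response is at most `1`, the total
response is almost everywhere at most the independence number of the cycle, which for the pentagon
is `2`. Hence `𝒞 ≤ (2 / 5) * 2 ^ 2 = 8 / 5`.
-/

section IndependenceNumber

open SimpleGraph

theorem sum_le_indepNum {V R : Type*} [Fintype V] [Semiring R] [PartialOrder R] [IsOrderedRing R]
    [NoZeroDivisors R] (G : SimpleGraph V) {x : V → R} (hle_one : ∀ i, x i ≤ 1)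
    (hmul : ∀ i j, G.Adj i j → x i * x j = 0) :
    ∑ i, x i ≤ (G.indepNum : R) := by
  classical
  have hindep : G.IsIndepSet ({i | x i ≠ 0} : Finset V) := fun i hi j hj _ hadj => by
    simp only [Finset.mem_coe, Finset.mem_filter_univ] at hi hj
    exact mul_ne_zero hi hj (hmul i j hadj)
  calc ∑ i, x i = ∑ i with x i ≠ 0, x i := (Finset.sum_filter_ne_zero _).symm
    _ ≤ Finset.card {i | x i ≠ 0} • (1 : R) := Finset.sum_le_card_nsmul _ _ _ fun i _ => hle_one i
    _ ≤ (G.indepNum : R) := by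
      rw [nsmul_one]
      exact Nat.mono_cast hindep.card_le_indepNum

theorem indepNum_cycleGraph_le (n : ℕ) : (cycleGraph (n + 2)).indepNum ≤ (n + 2) / 2 := by
  obtain ⟨s, hs, hcard⟩ := (cycleGraph (n + 2)).exists_isNIndepSet_indepNum
  have hdisj : Disjoint s (s.map (addRightEmbedding 1)) := by
    rw [Finset.disjoint_left]
    intro i hi hi'
    obtain ⟨j, hj, rfl⟩ := Finset.mem_map.1 hi'
    have hadj : (cycleGraph (n + 2)).Adj j (j + 1) :=
      cycleGraph_adj.2 <| .inr <| add_sub_cancel_left j 1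
    exact hs hj hi hadj.ne hadj
  have hunion : (s.disjUnion _ hdisj).card ≤ n + 2 := card_finset_fin_le _
  rw [Finset.card_disjUnion, Finset.card_map, hcard] at hunion
  lia

end IndependenceNumber

section SecondMoment

variable {Ω : Type*} [MeasurableSpace Ω] {μ : Measure Ω}

theorem sum_sum_integral_mul {ι 𝕜 : Type*} [RCLike 𝕜] (s : Finset ι) {f : ι → Ω → 𝕜}
    (hf : ∀ i ∈ s, MemLp (f i) 2 μ) :
    ∑ i ∈ s, ∑ j ∈ s, ∫ ω, f i ω * f j ω ∂μ = ∫ ω, (∑ i ∈ s, f i ω) ^ 2 ∂μ := by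
  have hint : ∀ i ∈ s, ∀ j ∈ s, Integrable (fun ω => f i ω * f j ω) μ :=
    fun i hi j hj => (hf i hi).integrable_mul (hf j hj)
  simp_rw [sq, Finset.sum_mul_sum]
  rw [integral_finsetSum s fun i hi => integrable_finsetSum s (hint i hi)]
  exact Finset.sum_congr rfl fun i hi => (integral_finsetSum s (hint i hi)).symm

theorem ae_mul_eq_zero_of_integral_mul_eq_zero {f g : Ω → ℝ} (hf : MemLp f 2 μ) (hg : MemLp g 2 μ)
    (hf_nonneg : 0 ≤ᵐ[μ] f) (hg_nonneg : 0 ≤ᵐ[μ] g) (h : ∫ ω, f ω * g ω ∂μ = 0) :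
    ∀ᵐ ω ∂μ, f ω * g ω = 0 := by
  have hmul_nonneg : 0 ≤ᵐ[μ] f * g := by
    filter_upwards [hf_nonneg, hg_nonneg] with ω using mul_nonneg
  exact (integral_eq_zero_iff_of_nonneg_ae hmul_nonneg (hf.integrable_mul hg)).1 h

theorem sum_sum_integral_mul_le_indepNum_sq [IsFiniteMeasure μ] {V : Type*} [Fintype V]
    (G : SimpleGraph V) {ξ : V → Ω → ℝ} (hmeas : ∀ i, AEStronglyMeasurable (ξ i) μ)
    (hmem : ∀ i, ∀ᵐ ω ∂μ, ξ i ω ∈ Set.Icc 0 1)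
    (horth : ∀ i j, G.Adj i j → ∫ ω, ξ i ω * ξ j ω ∂μ = 0) :
    ∑ i, ∑ j, ∫ ω, ξ i ω * ξ j ω ∂μ ≤ μ.real Set.univ * (G.indepNum : ℝ) ^ 2 := by
  have hLp : ∀ i, MemLp (ξ i) 2 μ := fun i => memLp_of_bounded (hmem i) (hmeas i) 2
  have hnonneg : ∀ i, 0 ≤ᵐ[μ] ξ i := fun i => (hmem i).mono fun _ h => h.1
  have hexcl : ∀ᵐ ω ∂μ, ∀ i j, G.Adj i j → ξ i ω * ξ j ω = 0 := by
    simp only [ae_all_iff, Filter.eventually_imp_distrib_left]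
    exact fun i j hadj => ae_mul_eq_zero_of_integral_mul_eq_zero (hLp i) (hLp j)
      (hnonneg i) (hnonneg j) (horth i j hadj)
  have hsq_le : ∀ᵐ ω ∂μ, (∑ i, ξ i ω) ^ 2 ≤ (G.indepNum : ℝ) ^ 2 := by
    filter_upwards [hexcl, ae_all_iff.2 hmem] with ω hexclω hmemω
    exact pow_le_pow_left₀ (Finset.sum_nonneg fun i _ => (hmemω i).1)
      (sum_le_indepNum G (fun i => (hmemω i).2) hexclω) 2
  calc ∑ i, ∑ j, ∫ ω, ξ i ω * ξ j ω ∂μ = ∫ ω, (∑ i, ξ i ω) ^ 2 ∂μ :=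
        sum_sum_integral_mul _ fun i _ => hLp i
    _ ≤ ∫ _, (G.indepNum : ℝ) ^ 2 ∂μ :=
        integral_mono_ae (memLp_finsetSum _ fun i _ => hLp i).integrable_sq
          (integrable_const _) hsq_le
    _ = μ.real Set.univ * (G.indepNum : ℝ) ^ 2 := by rw [integral_const, smul_eq_mul]

end SecondMoment

theorem noncontextual_bound_general
    {Λ : Type*} [MeasurableSpace Λ] (μ : Measure Λ) [IsProbabilityMeasure μ] {n : ℕ}
    (ξ : Fin (n + 2) → Λ → ℝ)
    (hmeas : ∀ i, AEStronglyMeasurable (ξ i) μ)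
    (hmem : ∀ i, ∀ᵐ l ∂μ, ξ i l ∈ Set.Icc 0 1)
    (horth : ∀ i, ∫ l, ξ i l * ξ (i + 1) l ∂μ = 0) :
    ∑ i, ∑ j, ∫ l, ξ i l * ξ j l ∂μ ≤ (((n + 2) / 2 : ℕ) : ℝ) ^ 2 := by
  have horth_adj : ∀ i j, (SimpleGraph.cycleGraph (n + 2)).Adj i j →
      ∫ l, ξ i l * ξ j l ∂μ = 0 := by
    intro i j hadj
    rcases SimpleGraph.cycleGraph_adj.1 hadj with h | h
    · rw [sub_eq_iff_eq_add'.1 h]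
      simpa only [mul_comm] using horth j
    · rw [sub_eq_iff_eq_add'.1 h]
      exact horth i
  calc ∑ i, ∑ j, ∫ l, ξ i l * ξ j l ∂μ
      ≤ ((SimpleGraph.cycleGraph (n + 2)).indepNum : ℝ) ^ 2 := by
        simpa only [probReal_univ, one_mul] using
          sum_sum_integral_mul_le_indepNum_sq _ hmeas hmem horth_adj
    _ ≤ (((n + 2) / 2 : ℕ) : ℝ) ^ 2 := by
        gcongr
        exact indepNum_cycleGraph_le n

/-- Non-contextual bound for the sequential-measurement correlator in the
KCBS-type single-device scenario: the ontic response functions ξ₀,…,ξ₄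
(indices mod 5) satisfy 𝒞 = (2/5)·Σ_{i,j} ∫ ξᵢ ξⱼ dμ ≤ 16/5. -/
theorem noncontextual_bound
    {Λ : Type*} [MeasurableSpace Λ] (μ : Measure Λ) [IsProbabilityMeasure μ]
    (ξ : Fin 5 → Λ → ℝ)
    (hmeas : ∀ i, Measurable (ξ i))
    (hnonneg : ∀ i l, 0 ≤ ξ i l)
    (hle_one : ∀ i l, ξ i l ≤ 1)
    (hcompl : ∀ i l, ξ i l + ξ (i + 1) l ≤ 1)
    (horth : ∀ i, ∫ l, ξ i l * ξ (i + 1) l ∂μ = 0)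
    (hsymm : ∀ i, ∫ l, ξ i l * ξ (i + 2) l ∂μ = ∫ l, ξ i l * ξ (i + 3) l ∂μ) :
    (2 / 5 : ℝ) * ∑ i : Fin 5, ∑ j : Fin 5, ∫ l, ξ i l * ξ j l ∂μ ≤ 16 / 5 := by
  have hsum := noncontextual_bound_general (n := 3) μ ξ (fun i => (hmeas i).aestronglyMeasurable)
    (fun i => ae_of_all μ fun l => ⟨hnonneg i l, hle_one i l⟩) horth
  norm_num at hsum
  linarith
end

section
/- Let (Λ, μ) be a probability measure space and let ξ₀, ξ₁, ξ₂, ξ₃, ξ₄ : Λ → ℝ be measurable functions satisfying: (i) 0 ≤ ξᵢ(λ) ≤ 1 for all λ and all i; (ii) ξᵢ(λ) + ξ_{i⊕1}(λ) ≤ 1 for all λ and all i; and (iii) the symmetry condition ∫ ξᵢ ξ_{i⊕2} dμ = ∫ ξᵢ ξ_{i⊕3} dμ for all i. Then for every i, the overlap of next-neighbor response functions satisfies ∫ ξᵢ ξ_{i⊕2} dμ ≤ 1/2. -/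
open MeasureTheory

section ThreeFunctions

variable {Λ : Type*} [MeasurableSpace Λ] {μ : Measure Λ} {f g h : Λ → ℝ}

theorem integral_mul_add_integral_mul_le_integral
    (hf : Integrable f μ) (hfg : Integrable (fun l => f l * g l) μ)
    (hfh : Integrable (fun l => f l * h l) μ)
    (hf_nonneg : ∀ᵐ l ∂μ, 0 ≤ f l) (hgh : ∀ᵐ l ∂μ, g l + h l ≤ 1) :
    ∫ l, f l * g l ∂μ + ∫ l, f l * h l ∂μ ≤ ∫ l, f l ∂μ := by
  rw [← integral_add hfg hfh]
  refine integral_mono_ae (hfg.add hfh) hf ?_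
  filter_upwards [hf_nonneg, hgh] with l hfl hghl
  calc f l * g l + f l * h l = f l * (g l + h l) := (mul_add _ _ _).symm
    _ ≤ f l := mul_le_of_le_one_right hfl hghl

theorem overlap_bound_general [IsProbabilityMeasure μ]
    (hf : AEMeasurable f μ) (hf_mem : ∀ᵐ l ∂μ, f l ∈ Set.Icc 0 1)
    (hg : Integrable g μ) (hh : Integrable h μ) (hgh : ∀ᵐ l ∂μ, g l + h l ≤ 1)
    (hsymm : ∫ l, f l * g l ∂μ = ∫ l, f l * h l ∂μ) :
    ∫ l, f l * g l ∂μ ≤ 1 / 2 := by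
  have hf_norm : ∀ᵐ l ∂μ, ‖f l‖ ≤ 1 :=
    hf_mem.mono fun l hl => (Real.norm_of_nonneg hl.1).trans_le hl.2
  have hf_int : Integrable f μ := .of_mem_Icc 0 1 hf hf_mem
  have hmean : ∫ l, f l ∂μ ≤ 1 :=
    (convex_Iic 1).integral_mem isClosed_Iic (hf_mem.mono fun _ hl => hl.2) hf_int
  have hsum : ∫ l, f l * g l ∂μ + ∫ l, f l * h l ∂μ ≤ ∫ l, f l ∂μ :=
    integral_mul_add_integral_mul_le_integral hf_int
      (hg.bdd_mul hf.aestronglyMeasurable hf_norm) (hh.bdd_mul hf.aestronglyMeasurable hf_norm)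
      (hf_mem.mono fun _ hl => hl.1) hgh
  linarith

end ThreeFunctions

/-- Overlap bound for next-neighbor ontic response functions in the KCBS
5-cycle: under positivity, completeness and the symmetry condition,
∫ ξᵢ ξ_{i⊕2} dμ ≤ 1/2 for every i. -/
theorem overlap_bound
    {Λ : Type*} [MeasurableSpace Λ] (μ : Measure Λ) [IsProbabilityMeasure μ]
    (ξ : Fin 5 → Λ → ℝ)
    (hmeas : ∀ i, Measurable (ξ i))
    (hnonneg : ∀ i l, 0 ≤ ξ i l)
    (hle_one : ∀ i l, ξ i l ≤ 1)
    (hcompl : ∀ i l, ξ i l + ξ (i + 1) l ≤ 1)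
    (hsymm : ∀ i, ∫ l, ξ i l * ξ (i + 2) l ∂μ = ∫ l, ξ i l * ξ (i + 3) l ∂μ) :
    ∀ i, ∫ l, ξ i l * ξ (i + 2) l ∂μ ≤ 1 / 2 := by
  intro i
  have hmem j : ∀ᵐ l ∂μ, ξ j l ∈ Set.Icc 0 1 := ae_of_all _ fun l => ⟨hnonneg j l, hle_one j l⟩
  have hint j : Integrable (ξ j) μ := .of_mem_Icc 0 1 (hmeas j).aemeasurable (hmem j)
  have hadj l : ξ (i + 2) l + ξ (i + 3) l ≤ 1 := add_assoc i 2 1 ▸ hcompl (i + 2) l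
  exact overlap_bound_general (hmeas i).aemeasurable (hmem i) (hint _) (hint _)
    (ae_of_all _ hadj) (hsymm i)
end

section
/- Let ξ₀, ξ₁, ξ₂, ξ₃, ξ₄ be real numbers satisfying 0 ≤ ξᵢ ≤ 1 for all i and ξᵢ + ξ_{i⊕1} ≤ 1 for all i (indices modulo 5). Then Σ_{i=0}^{4} ξᵢ ξ_{i⊕2} = ξ₀ξ₂ + ξ₁ξ₃ + ξ₂ξ₄ + ξ₃ξ₀ + ξ₄ξ₁ ≤ ξ₀ + ξ₁ + ξ₂ξ₄. -/
theorem sum_fin_five_mul_add_two {R : Type*} [CommSemiring R] (ξ : Fin 5 → R) :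
    ∑ i : Fin 5, ξ i * ξ (i + 2) =
      ξ 0 * (ξ 2 + ξ 3) + ξ 1 * (ξ 3 + ξ 4) + ξ 2 * ξ 4 :=
  calc
    _ = ξ 0 * ξ 2 + ξ 1 * ξ 3 + ξ 2 * ξ 4 + ξ 3 * ξ 0 + ξ 4 * ξ 1 := Fin.sum_univ_five _
    _ = _ := by ring

theorem pointwise_estimate_general {R : Type*} [CommSemiring R] [PartialOrder R]
    [IsOrderedRing R] {ξ : Fin 5 → R} (h₀ : 0 ≤ ξ 0) (h₁ : 0 ≤ ξ 1)
    (h₂₃ : ξ 2 + ξ 3 ≤ 1) (h₃₄ : ξ 3 + ξ 4 ≤ 1) :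
    ∑ i : Fin 5, ξ i * ξ (i + 2) ≤ ξ 0 + ξ 1 + ξ 2 * ξ 4 := by
  rw [sum_fin_five_mul_add_two]
  gcongr
  · exact mul_le_of_le_one_right h₀ h₂₃
  · exact mul_le_of_le_one_right h₁ h₃₄

/-- Pointwise estimate used in the derivation of the non-contextual bound:
for ξᵢ ∈ [0,1] with adjacent sums ξᵢ + ξ_{i⊕1} ≤ 1 (indices mod 5),
Σᵢ ξᵢ ξ_{i⊕2} ≤ ξ₀ + ξ₁ + ξ₂ξ₄. -/
theorem pointwise_estimate
    (ξ : Fin 5 → ℝ)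
    (hnonneg : ∀ i, 0 ≤ ξ i)
    (hle_one : ∀ i, ξ i ≤ 1)
    (hcompl : ∀ i, ξ i + ξ (i + 1) ≤ 1) :
    ∑ i : Fin 5, ξ i * ξ (i + 2) ≤ ξ 0 + ξ 1 + ξ 2 * ξ 4 :=
  pointwise_estimate_general (hnonneg 0) (hnonneg 1) (hcompl 2) (hcompl 3)
end
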